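/- For every ε > 0 there exist a finite set S of points in the plane in convex position and in general position and two points u, v ∈ S such that every path between u and v in ΘΘ₆(S) has length at least (4 − ε)·|uv|. In particular, there is no t < 4 such that ΘΘ₆(S) is a t-spanner for every finite set S in convex and general position. -/

import Mathlib

/-!
The lower bound is attained by five points close to the centre and four consecutive vertices of a
regular hexagon. In coordinates `(x, √3 y)` and for a small `e > 0` they are

* `u = (0, 0)`, `v = (1, e)`, `w = (1/2, -1/2 + 2e)`,
* `a = (-1/2 + 4e, -1/2 + 3e)`, `b = (-1 + 10e, -2e)`.

All of `|uv|, |ub|, |ba|, |aw|, |wv|` tend to `1` as `e → 0`. The perturbation is chosen so that `u`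
selects each of the other four points in `Θ₆`, but its edges to `v`, `w`, `a` are discarded in
`ΘΘ₆` because of the slightly shorter edges `w → v`, `a → w`, `b → a` in the same cones of the
targets. The six pairs `uv`, `uw`, `ua`, `va`, `vb`, `wb` are nonadjacent in `ΘΘ₆`, so only the
path `u - b - a - w - v`, of length at least `4 - 27e`, can be left, whereas `|uv| ≤ 1 + e`.

In the coordinates `(x, √3 y)` the open cones are described by linear inequalities with rational
coefficients and the projective distance is a multiple of a linear form (`InCone` and the lemmas
`inCone_zero`, …, `inCone_five`), so every comparison is linear arithmetic in `e`. Walk lengths are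
bounded below by a potential (`potential_le_pathLength`), and extreme points are found from strictly
separating linear forms (`mem_extremePoints_of_form`).
-/

open Real

noncomputable section

/-- Counterclockwise angle in `[0, 2π)` from the positive x-axis to the direction of `z`. -/
def argIn (z : ℂ) : ℝ := if 0 ≤ Complex.arg z then Complex.arg z else Complex.arg z + 2 * π

/-- The half-open cone `C_i(u)` with apex `u`: points `p ≠ u` whose direction from `u` has
counterclockwise angle in `[(i-1)π/3, iπ/3)`. -/
def cone (i : ℕ) (u : ℂ) : Set ℂ :=
  {p | p ≠ u ∧ argIn (p - u) ∈ Set.Ico (((i : ℝ) - 1) * (π / 3)) ((i : ℝ) * (π / 3))}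

/-- The index `i ∈ {1, …, 6}` of the cone of `u` containing `v`. -/
def coneIdx (u v : ℂ) : ℕ := (⌊argIn (v - u) / (π / 3)⌋).toNat + 1

/-- The angle of the bisector ray of the cone of `u` containing `v`. -/
def bisAngle (u v : ℂ) : ℝ := ((coneIdx u v : ℝ) - 1) * (π / 3) + π / 6

/-- The projective distance from `u` to `v`: the Euclidean distance from `u` to the
orthogonal projection of `v` onto the bisector ray of the cone of `u` containing `v`. -/
def projDist (u v : ℂ) : ℝ :=
  ((v - u) * Complex.exp (-(Complex.I * (bisAngle u v : ℂ)))).re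

/-- `S` is in general position: no two points of `S` lie on a common line parallel to one of
the six rays from the origin at angles `jπ/3`. -/
def GenPos (S : Finset ℂ) : Prop :=
  ∀ u ∈ S, ∀ v ∈ S, u ≠ v → ∀ j : ℕ, argIn (v - u) ≠ (j : ℝ) * (π / 3)

/-- `S` is in convex position: every point of `S` is an extreme point of the convex hull. -/
def ConvexPos (S : Finset ℂ) : Prop :=
  ∀ p ∈ S, p ∈ Set.extremePoints ℝ (convexHull ℝ (S : Set ℂ))

/-- `u → v` is a directed edge of `Θ₆(S)`: `v` minimizes the projective distance from `u`
among the points of `S` in the cone of `u` containing `v`. -/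
def ThetaEdge (S : Finset ℂ) (u v : ℂ) : Prop :=
  u ∈ S ∧ v ∈ S ∧ v ≠ u ∧
    ∀ w ∈ S, w ∈ cone (coneIdx u v) u → projDist u v ≤ projDist u w

/-- `u → v` is a directed edge of `ΘΘ₆(S)`: it is an edge of `Θ₆(S)` and among all incoming
`Θ₆`-edges `w → v` with `w` in the same cone of `v` as `u`, it minimizes `‖wv‖`. -/
def ThetaThetaEdge (S : Finset ℂ) (u v : ℂ) : Prop :=
  ThetaEdge S u v ∧
    ∀ w, ThetaEdge S w v → coneIdx v w = coneIdx v u → projDist u v ≤ projDist w v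

/-- Undirected adjacency in `ΘΘ₆(S)`: paths may use edges in either direction. -/
def TTAdj (S : Finset ℂ) (u v : ℂ) : Prop := ThetaThetaEdge S u v ∨ ThetaThetaEdge S v u

/-- `p` is a path between `u` and `v` with respect to the adjacency relation `A`. -/
def IsPath (A : ℂ → ℂ → Prop) (u v : ℂ) (p : List ℂ) : Prop :=
  p.Chain' A ∧ p.head? = some u ∧ p.getLast? = some v

/-- The Euclidean length of the polygonal path through the points of `p`. -/
def pathLength (p : List ℂ) : ℝ := (List.zipWith dist p p.tail).sum

/-! ### Cones in the coordinates `(x, √3 y)` -/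

/-- The point with coordinates `(x, √3 y)`. -/
def pt (x y : ℝ) : ℂ := ⟨x, √3 * y⟩

/-- `q` lies in the open cone number `k + 1` of `p`, and `‖pq‖ = (√3 / 2) m`. -/
def InCone (k : ℕ) (p q : ℂ) (m : ℝ) : Prop :=
  (k : ℝ) * (π / 3) < argIn (q - p) ∧ argIn (q - p) < ((k : ℝ) + 1) * (π / 3) ∧
    coneIdx p q = k + 1 ∧ projDist p q = √3 / 2 * m

lemma argIn_nonneg (z : ℂ) : 0 ≤ argIn z := by
  unfold argIn
  split_ifs with h
  · exact h
  · linarith [Complex.neg_pi_lt_arg z, Real.pi_pos]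

lemma argIn_lt (z : ℂ) : argIn z < 2 * π := by
  unfold argIn
  split_ifs with h
  · linarith [Complex.arg_le_pi z, Real.pi_pos]
  · linarith

lemma re_eq_argIn (z : ℂ) : z.re = ‖z‖ * cos (argIn z) := by
  unfold argIn
  split_ifs
  · rw [Complex.norm_mul_cos_arg]
  · rw [Real.cos_add_two_pi, Complex.norm_mul_cos_arg]

lemma im_eq_argIn (z : ℂ) : z.im = ‖z‖ * sin (argIn z) := by
  unfold argIn
  split_ifs
  · rw [Complex.norm_mul_sin_arg]
  · rw [Real.sin_add_two_pi, Complex.norm_mul_sin_arg]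

/-- The angle of `z` lies in `(α, α + π/3)` as soon as `z` is on the left of the ray at angle `α`
and on the right of the ray at angle `α + π/3`. -/
lemma argIn_mem_of_sides (z : ℂ) (α : ℝ) (hα : 0 ≤ α) (hα' : α ≤ 5 * (π / 3))
    (h1 : 0 < z.im * cos α - z.re * sin α)
    (h2 : 0 < z.re * sin (α + π / 3) - z.im * cos (α + π / 3)) :
    α < argIn z ∧ argIn z < α + π / 3 := by
  have hpi := Real.pi_pos
  have hn : 0 ≤ ‖z‖ := norm_nonneg z
  have e1 : z.im * cos α - z.re * sin α = ‖z‖ * sin (argIn z - α) := by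
    rw [Real.sin_sub, im_eq_argIn z, re_eq_argIn z]
    ring
  have e2 : z.re * sin (α + π / 3) - z.im * cos (α + π / 3)
      = ‖z‖ * sin (α + π / 3 - argIn z) := by
    rw [Real.sin_sub (α + π / 3), im_eq_argIn z, re_eq_argIn z]
    ring
  rw [e1] at h1
  rw [e2] at h2
  have s1 : 0 < sin (argIn z - α) := pos_of_mul_pos_right h1 hn
  have s2 : 0 < sin (α + π / 3 - argIn z) := pos_of_mul_pos_right h2 hn
  have hz0 := argIn_nonneg z
  have hz1 := argIn_lt z
  have hlt : α < argIn z := by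
    by_contra! hle
    rcases le_or_gt (-π) (argIn z - α) with h | h
    · exact absurd (Real.sin_nonpos_of_nonpos_of_neg_pi_le (by linarith) h) (not_le.2 s1)
    -- in the next case `α + π/3 - argIn z` lies in `(4π/3, 2π]`, where the sine is not positive
    · have : sin (α + π / 3 - argIn z - 2 * π) ≤ 0 :=
        Real.sin_nonpos_of_nonpos_of_neg_pi_le (by linarith) (by linarith)
      rw [Real.sin_sub_two_pi] at this
      linarith
  have hlt2 : argIn z < α + π / 3 := by
    by_contra! hle
    rcases le_or_gt (-π) (α + π / 3 - argIn z) with h | h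
    · exact absurd (Real.sin_nonpos_of_nonpos_of_neg_pi_le (by linarith) h) (not_le.2 s2)
    · have : sin (argIn z - α - 2 * π) ≤ 0 :=
        Real.sin_nonpos_of_nonpos_of_neg_pi_le (by linarith) (by linarith)
      rw [Real.sin_sub_two_pi] at this
      linarith
  exact ⟨hlt, hlt2⟩

lemma coneIdx_of_mem (k : ℕ) (p q : ℂ) (h1 : (k : ℝ) * (π / 3) < argIn (q - p))
    (h2 : argIn (q - p) < ((k : ℝ) + 1) * (π / 3)) : coneIdx p q = k + 1 := by
  have hpi : 0 < π / 3 := by positivity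
  have : ⌊argIn (q - p) / (π / 3)⌋ = (k : ℤ) := by
    rw [Int.floor_eq_iff]
    push_cast
    exact ⟨by rw [le_div_iff₀ hpi]; exact h1.le, by rw [div_lt_iff₀ hpi]; exact h2⟩
  unfold coneIdx
  rw [this]
  simp

lemma projDist_of_coneIdx (k : ℕ) (p q : ℂ) (h : coneIdx p q = k + 1) :
    projDist p q = (q - p).re * cos (k * (π / 3) + π / 6)
      + (q - p).im * sin (k * (π / 3) + π / 6) := by
  have hb : bisAngle p q = k * (π / 3) + π / 6 := by
    unfold bisAngle
    rw [h]
    push_cast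
    ring
  have he : Complex.exp (-(Complex.I * ((k * (π / 3) + π / 6 : ℝ) : ℂ)))
      = Complex.exp ((-(k * (π / 3) + π / 6) : ℝ) * Complex.I) := by
    congr 1
    push_cast
    ring
  unfold projDist
  rw [hb, he, Complex.mul_re, Complex.exp_ofReal_mul_I_re, Complex.exp_ofReal_mul_I_im,
    Real.cos_neg, Real.sin_neg]
  ring

/-- Criterion for `InCone` in terms of the cosines and sines of the two sides and the bisector. -/
lemma inCone_of_trig (k : ℕ) (hk : k ≤ 5) (x y x' y' m c s c' s' cb sb : ℝ)
    (hc : cos (k * (π / 3)) = c) (hs : sin (k * (π / 3)) = s)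
    (hc' : cos (k * (π / 3) + π / 3) = c') (hs' : sin (k * (π / 3) + π / 3) = s')
    (hcb : cos (k * (π / 3) + π / 6) = cb) (hsb : sin (k * (π / 3) + π / 6) = sb)
    (h1 : 0 < √3 * (y' - y) * c - (x' - x) * s)
    (h2 : 0 < (x' - x) * s' - √3 * (y' - y) * c')
    (hm : (x' - x) * cb + √3 * (y' - y) * sb = √3 / 2 * m) :
    InCone k (pt x y) (pt x' y') m := by
  have hre : (pt x' y' - pt x y).re = x' - x := by simp [pt]
  have him : (pt x' y' - pt x y).im = √3 * (y' - y) := by simp [pt]; ring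
  have hk' : (k : ℝ) ≤ 5 := by exact_mod_cast hk
  obtain ⟨g1, g2⟩ := argIn_mem_of_sides (pt x' y' - pt x y) (k * (π / 3)) (by positivity)
    (mul_le_mul_of_nonneg_right hk' (by positivity))
    (by rw [hre, him, hc, hs]; exact h1) (by rw [hre, him, hc', hs']; exact h2)
  have g2' : argIn (pt x' y' - pt x y) < ((k : ℝ) + 1) * (π / 3) := by linarith
  have g3 := coneIdx_of_mem k _ _ g1 g2'
  refine ⟨g1, g2', g3, ?_⟩
  rw [projDist_of_coneIdx k _ _ g3, hre, him, hcb, hsb, hm]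

lemma sqrt_three_pos : 0 < √3 := Real.sqrt_pos.2 (by norm_num)

lemma cos_two_thirds : cos (π / 3 + π / 3) = -(1 / 2) := by
  rw [show π / 3 + π / 3 = π - π / 3 by ring, Real.cos_pi_sub, Real.cos_pi_div_three]

lemma sin_two_thirds : sin (π / 3 + π / 3) = √3 / 2 := by
  rw [show π / 3 + π / 3 = π - π / 3 by ring, Real.sin_pi_sub, Real.sin_pi_div_three]

lemma inCone_zero (x y x' y' m : ℝ) (h1 : 0 < y' - y) (h2 : y' - y < x' - x)
    (hm : m = (x' - x) + (y' - y)) : InCone 0 (pt x y) (pt x' y') m := by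
  subst hm
  have h3 := sqrt_three_pos
  refine inCone_of_trig 0 (by norm_num) _ _ _ _ _ 1 0 (1 / 2) (√3 / 2) (√3 / 2) (1 / 2)
    ?_ ?_ ?_ ?_ ?_ ?_ ?_ ?_ ?_
  · simp
  · simp
  · simp
  · simp
  · simp
  · simp
  · nlinarith
  · nlinarith
  · ring

lemma inCone_one (x y x' y' m : ℝ) (h1 : x' - x < y' - y) (h2 : -(x' - x) < y' - y)
    (hm : m = 2 * (y' - y)) : InCone 1 (pt x y) (pt x' y') m := by
  subst hm
  have h3 := sqrt_three_pos
  have hb : ((1 : ℕ) : ℝ) * (π / 3) + π / 6 = π / 2 := by push_cast; ring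
  refine inCone_of_trig 1 (by norm_num) _ _ _ _ _ (1 / 2) (√3 / 2) (-(1 / 2)) (√3 / 2) 0 1
    ?_ ?_ ?_ ?_ ?_ ?_ ?_ ?_ ?_
  · simp
  · simp
  · simpa using cos_two_thirds
  · simpa using sin_two_thirds
  · rw [hb, Real.cos_pi_div_two]
  · rw [hb, Real.sin_pi_div_two]
  · nlinarith
  · nlinarith
  · ring

lemma inCone_two (x y x' y' m : ℝ) (h1 : 0 < y' - y) (h2 : y' - y < -(x' - x))
    (hm : m = -(x' - x) + (y' - y)) : InCone 2 (pt x y) (pt x' y') m := by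
  subst hm
  have h3 := sqrt_three_pos
  have ha : ((2 : ℕ) : ℝ) * (π / 3) = π / 3 + π / 3 := by push_cast; ring
  have ha' : ((2 : ℕ) : ℝ) * (π / 3) + π / 3 = π := by push_cast; ring
  have hb : ((2 : ℕ) : ℝ) * (π / 3) + π / 6 = π - π / 6 := by push_cast; ring
  refine inCone_of_trig 2 (by norm_num) _ _ _ _ _ (-(1 / 2)) (√3 / 2) (-1) 0 (-(√3 / 2)) (1 / 2)
    ?_ ?_ ?_ ?_ ?_ ?_ ?_ ?_ ?_
  · rw [ha, cos_two_thirds]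
  · rw [ha, sin_two_thirds]
  · rw [ha', Real.cos_pi]
  · rw [ha', Real.sin_pi]
  · rw [hb, Real.cos_pi_sub, Real.cos_pi_div_six]
  · rw [hb, Real.sin_pi_sub, Real.sin_pi_div_six]
  · nlinarith
  · nlinarith
  · ring

lemma inCone_three (x y x' y' m : ℝ) (h1 : y' - y < 0) (h2 : x' - x < y' - y)
    (hm : m = -(x' - x) - (y' - y)) : InCone 3 (pt x y) (pt x' y') m := by
  subst hm
  have h3 := sqrt_three_pos
  have ha : ((3 : ℕ) : ℝ) * (π / 3) = π := by push_cast; ring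
  refine inCone_of_trig 3 (by norm_num) _ _ _ _ _ (-1) 0 (-(1 / 2)) (-(√3 / 2)) (-(√3 / 2))
    (-(1 / 2)) ?_ ?_ ?_ ?_ ?_ ?_ ?_ ?_ ?_
  · rw [ha, Real.cos_pi]
  · rw [ha, Real.sin_pi]
  · rw [ha, add_comm, Real.cos_add_pi, Real.cos_pi_div_three]
  · rw [ha, add_comm, Real.sin_add_pi, Real.sin_pi_div_three]
  · rw [ha, add_comm, Real.cos_add_pi, Real.cos_pi_div_six]
  · rw [ha, add_comm, Real.sin_add_pi, Real.sin_pi_div_six]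
  · nlinarith
  · nlinarith
  · ring

lemma inCone_four (x y x' y' m : ℝ) (h1 : y' - y < x' - x) (h2 : y' - y < -(x' - x))
    (hm : m = -2 * (y' - y)) : InCone 4 (pt x y) (pt x' y') m := by
  subst hm
  have h3 := sqrt_three_pos
  have ha : ((4 : ℕ) : ℝ) * (π / 3) = π / 3 + π := by push_cast; ring
  have ha' : ((4 : ℕ) : ℝ) * (π / 3) + π / 3 = π / 3 + π / 3 + π := by push_cast; ring
  have hb : ((4 : ℕ) : ℝ) * (π / 3) + π / 6 = π / 2 + π := by push_cast; ring
  refine inCone_of_trig 4 (by norm_num) _ _ _ _ _ (-(1 / 2)) (-(√3 / 2)) (1 / 2) (-(√3 / 2)) 0 (-1)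
    ?_ ?_ ?_ ?_ ?_ ?_ ?_ ?_ ?_
  · rw [ha, Real.cos_add_pi, Real.cos_pi_div_three]
  · rw [ha, Real.sin_add_pi, Real.sin_pi_div_three]
  · rw [ha', Real.cos_add_pi, cos_two_thirds, neg_neg]
  · rw [ha', Real.sin_add_pi, sin_two_thirds]
  · rw [hb, Real.cos_add_pi, Real.cos_pi_div_two, neg_zero]
  · rw [hb, Real.sin_add_pi, Real.sin_pi_div_two]
  · nlinarith
  · nlinarith
  · ring

lemma inCone_five (x y x' y' m : ℝ) (h1 : y' - y < 0) (h2 : -(y' - y) < x' - x)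
    (hm : m = (x' - x) - (y' - y)) : InCone 5 (pt x y) (pt x' y') m := by
  subst hm
  have h3 := sqrt_three_pos
  have ha : ((5 : ℕ) : ℝ) * (π / 3) = π / 3 + π / 3 + π := by push_cast; ring
  have ha' : ((5 : ℕ) : ℝ) * (π / 3) + π / 3 = 2 * π := by push_cast; ring
  have hb : ((5 : ℕ) : ℝ) * (π / 3) + π / 6 = 2 * π - π / 6 := by push_cast; ring
  refine inCone_of_trig 5 (by norm_num) _ _ _ _ _ (1 / 2) (-(√3 / 2)) 1 0 (√3 / 2) (-(1 / 2))
    ?_ ?_ ?_ ?_ ?_ ?_ ?_ ?_ ?_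
  · rw [ha, Real.cos_add_pi, cos_two_thirds, neg_neg]
  · rw [ha, Real.sin_add_pi, sin_two_thirds]
  · rw [ha', Real.cos_two_pi]
  · rw [ha', Real.sin_two_pi]
  · rw [hb, Real.cos_two_pi_sub, Real.cos_pi_div_six]
  · rw [hb, Real.sin_two_pi_sub, Real.sin_pi_div_six]
  · nlinarith
  · nlinarith
  · ring

/-! ### Edges -/

lemma InCone.ne {k : ℕ} {p q : ℂ} {m : ℝ} (h : InCone k p q m) : q ≠ p := by
  rintro rfl
  have h1 := h.1
  have : argIn (q - q) = 0 := by simp [argIn]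
  rw [this] at h1
  exact absurd h1 (not_lt.2 (by positivity))

lemma InCone.mem_cone {k : ℕ} {p q : ℂ} {m : ℝ} (h : InCone k p q m) : q ∈ cone (k + 1) p := by
  refine ⟨h.ne, ?_, ?_⟩
  · push_cast
    rw [add_sub_cancel_right]
    exact h.1.le
  · push_cast
    exact h.2.1

lemma InCone.eq_of_mem_cone {k l : ℕ} {p q : ℂ} {m : ℝ} (h : InCone k p q m)
    (hq : q ∈ cone (l + 1) p) : l = k := by
  obtain ⟨-, h1, h2⟩ := hq
  push_cast at h1 h2
  rw [add_sub_cancel_right] at h1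
  have hpi : 0 < π / 3 := by positivity
  have a1 : (l : ℝ) < k + 1 := lt_of_mul_lt_mul_right (h1.trans_lt h.2.1) hpi.le
  have a2 : (k : ℝ) < l + 1 := lt_of_mul_lt_mul_right (h.1.trans h2) hpi.le
  norm_cast at a1 a2
  omega

lemma InCone.argIn_ne {k : ℕ} {p q : ℂ} {m : ℝ} (h : InCone k p q m) (j : ℕ) :
    argIn (q - p) ≠ (j : ℝ) * (π / 3) := by
  intro hj
  have hpi : 0 < π / 3 := by positivity
  have h1 := h.1
  have h2 := h.2.1
  rw [hj] at h1 h2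
  have a1 : (k : ℝ) < j := lt_of_mul_lt_mul_right h1 hpi.le
  have a2 : (j : ℝ) < k + 1 := lt_of_mul_lt_mul_right h2 hpi.le
  norm_cast at a1 a2
  omega

lemma InCone.projDist_lt {k l : ℕ} {p q p' q' : ℂ} {m m' : ℝ} (h : InCone k p q m)
    (h' : InCone l p' q' m') (hm : m < m') : projDist p q < projDist p' q' := by
  rw [h.2.2.2, h'.2.2.2]
  exact mul_lt_mul_of_pos_left hm (by positivity)

/-- A closer point of the same cone prevents a `Θ₆`-edge. -/
lemma not_thetaEdge {S : Finset ℂ} {k : ℕ} {p q r : ℂ} {m m' : ℝ} (hq : InCone k p q m)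
    (hr : InCone k p r m') (hS : r ∈ S) (hm : m' < m) : ¬ ThetaEdge S p q := by
  rintro ⟨-, -, -, h⟩
  have := h r hS (by rw [hq.2.2.1]; exact hr.mem_cone)
  exact absurd this (not_le.2 (hr.projDist_lt hq hm))

/-- The only point of a cone is the target of a `Θ₆`-edge. -/
lemma thetaEdge_of_unique {S : Finset ℂ} {k : ℕ} {p q : ℂ} {m : ℝ} (hq : InCone k p q m)
    (hp : p ∈ S) (hqS : q ∈ S)
    (h : ∀ r ∈ S, r = p ∨ r = q ∨ ∃ l m', l ≠ k ∧ InCone l p r m') : ThetaEdge S p q := by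
  refine ⟨hp, hqS, hq.ne, fun r hr hrc => ?_⟩
  rw [hq.2.2.1] at hrc
  rcases h r hr with rfl | rfl | ⟨l, m', hl, hc⟩
  · exact absurd rfl hrc.1
  · exact le_rfl
  · exact absurd (hc.eq_of_mem_cone hrc).symm hl

/-- A shorter incoming `Θ₆`-edge `r → q` in the same cone of `q` discards the edge `p → q`. -/
lemma not_thetaThetaEdge {S : Finset ℂ} {k l l' : ℕ} {p q r : ℂ} {m m' n n' : ℝ}
    (hr : ThetaEdge S r q) (hqr : InCone k q r n) (hqp : InCone k q p n')
    (hpq : InCone l p q m) (hrq : InCone l' r q m') (hm : m' < m) : ¬ ThetaThetaEdge S p q := by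
  rintro ⟨-, h⟩
  have := h r hr (by rw [hqr.2.2.1, hqp.2.2.1])
  exact absurd this (not_le.2 (hrq.projDist_lt hpq hm))

lemma TTAdj.symm {S : Finset ℂ} {p q : ℂ} (h : TTAdj S p q) : TTAdj S q p := Or.symm h

/-! ### Walks and extreme points -/

/-- A function that grows by at most the length of each edge bounds walk lengths from below. -/
lemma potential_le_pathLength {A : ℂ → ℂ → Prop} {f : ℂ → ℝ}
    (hf : ∀ x y, A x y → f y - f x ≤ dist x y) {u v : ℂ} {p : List ℂ} (hp : IsPath A u v p) :
    f v - f u ≤ pathLength p := by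
  obtain ⟨hc, hh, hl⟩ := hp
  induction p generalizing u with
  | nil => simp at hh
  | cons x t ih =>
    simp only [List.head?_cons, Option.some.injEq] at hh
    subst hh
    cases t with
    | nil =>
      simp only [List.getLast?_singleton, Option.some.injEq] at hl
      subst hl
      simp [pathLength]
    | cons y t =>
      have hc' := List.isChain_cons_cons.1 hc
      have h1 := ih hc'.2 rfl (by simpa using hl)
      have h2 := hf _ _ hc'.1
      have h3 : pathLength (x :: y :: t) = dist x y + pathLength (y :: t) := by
        simp [pathLength]
      linarith

/-- A point that strictly maximizes a linear form over `S` is extreme in the convex hull. -/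
lemma mem_extremePoints_of_form {S : Finset ℂ} {p : ℂ} (hp : p ∈ S) (l : ℂ →ₗ[ℝ] ℝ)
    (h : ∀ q ∈ S, q ≠ p → l q < l p) :
    p ∈ Set.extremePoints ℝ (convexHull ℝ (S : Set ℂ)) := by
  have hconv : Convex ℝ {z : ℂ | l z < l p ∨ z = p} := by
    rw [convex_iff_forall_pos]
    rintro x hx y hy s t hs ht hst
    by_cases hxy : x = p ∧ y = p
    · right
      rw [hxy.1, hxy.2, ← add_smul, hst, one_smul]
    · left
      have hx' : l x ≤ l p := by rcases hx with hx | rfl; exacts [hx.le, le_rfl]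
      have hy' : l y ≤ l p := by rcases hy with hy | rfl; exacts [hy.le, le_rfl]
      have e : l (s • x + t • y) = s * l x + t * l y := by
        rw [map_add, map_smul, map_smul, smul_eq_mul, smul_eq_mul]
      have hstp : l p = s * l p + t * l p := by rw [← add_mul, hst, one_mul]
      rw [e, hstp]
      rcases hx with hx | hx
      · nlinarith
      · rcases hy with hy | hy
        · nlinarith
        · exact absurd ⟨hx, hy⟩ hxy
  have hsub : convexHull ℝ (S : Set ℂ) ⊆ {z : ℂ | l z < l p ∨ z = p} := by
    refine convexHull_min (fun q hq => ?_) hconv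
    by_cases hqp : q = p
    · exact Or.inr hqp
    · exact Or.inl (h q hq hqp)
  rw [mem_extremePoints_iff_left]
  refine ⟨subset_convexHull ℝ _ hp, fun x hx y hy hxy => ?_⟩
  obtain ⟨s, t, hs, ht, hst, he⟩ := hxy
  have hy' : l y ≤ l p := by rcases hsub hy with hy | rfl; exacts [hy.le, le_rfl]
  rcases hsub hx with hx | hx
  · have e : l p = s * l x + t * l y := by
      rw [← he, map_add, map_smul, map_smul, smul_eq_mul, smul_eq_mul]
    have hstp : l p = s * l p + t * l p := by rw [← add_mul, hst, one_mul]
    nlinarith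
  · exact hx

/-- The linear form `(x, √3 y) ↦ c x + d y`. -/
def form (c d : ℝ) : ℂ →ₗ[ℝ] ℝ := c • Complex.reLm + (d / √3) • Complex.imLm

lemma form_pt (c d x y : ℝ) : form c d (pt x y) = c * x + d * y := by
  have := sqrt_three_pos.ne'
  simp [form, pt]
  field_simp

lemma dist_pt (x y x' y' : ℝ) :
    dist (pt x y) (pt x' y') = √((x - x') ^ 2 + 3 * (y - y') ^ 2) := by
  rw [Complex.dist_eq_re_im]
  congr 1
  have : √3 ^ 2 = 3 := Real.sq_sqrt (by norm_num)
  simp only [pt]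
  linear_combination (y - y') ^ 2 * this

/-! ### The five points -/

/-- The centre, one endpoint of the badly connected pair. -/
def pU : ℂ := pt 0 0

/-- The other endpoint of the badly connected pair. -/
def pV (e : ℝ) : ℂ := pt 1 e

/-- The point whose edge to `pV` discards the edge from `pU` to `pV`. -/
def pW (e : ℝ) : ℂ := pt (1 / 2) (-(1 / 2) + 2 * e)

/-- The point whose edge to `pW` discards the edge from `pU` to `pW`. -/
def pA (e : ℝ) : ℂ := pt (-(1 / 2) + 4 * e) (-(1 / 2) + 3 * e)

/-- The point whose edge to `pA` discards the edge from `pU` to `pA`. -/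
def pB (e : ℝ) : ℂ := pt (-1 + 10 * e) (-2 * e)

/-- The five-point set. -/
def fiveSet (e : ℝ) : Finset ℂ := {pU, pV e, pW e, pA e, pB e}

lemma mem_fiveSet {e : ℝ} {z : ℂ} :
    z ∈ fiveSet e ↔ z = pU ∨ z = pV e ∨ z = pW e ∨ z = pA e ∨ z = pB e := by
  simp [fiveSet]

lemma coneUV {e : ℝ} (h0 : 0 < e) (h1 : e < 1 / 100) :
    InCone 0 pU (pV e) (1 + e) :=
  inCone_zero _ _ _ _ _ (by linarith) (by linarith) (by ring)

lemma coneVU {e : ℝ} (h0 : 0 < e) (h1 : e < 1 / 100) :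
    InCone 3 (pV e) pU (1 + e) :=
  inCone_three _ _ _ _ _ (by linarith) (by linarith) (by ring)

lemma coneUW {e : ℝ} (h0 : 0 < e) (h1 : e < 1 / 100) :
    InCone 5 pU (pW e) (1 - 2 * e) :=
  inCone_five _ _ _ _ _ (by linarith) (by linarith) (by ring)

lemma coneWU {e : ℝ} (h0 : 0 < e) (h1 : e < 1 / 100) :
    InCone 2 (pW e) pU (1 - 2 * e) :=
  inCone_two _ _ _ _ _ (by linarith) (by linarith) (by ring)

lemma coneUA {e : ℝ} (h0 : 0 < e) (h1 : e < 1 / 100) :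
    InCone 4 pU (pA e) (1 - 6 * e) :=
  inCone_four _ _ _ _ _ (by linarith) (by linarith) (by ring)

lemma coneAU {e : ℝ} (h0 : 0 < e) (h1 : e < 1 / 100) :
    InCone 1 (pA e) pU (1 - 6 * e) :=
  inCone_one _ _ _ _ _ (by linarith) (by linarith) (by ring)

lemma coneUB {e : ℝ} (h0 : 0 < e) (h1 : e < 1 / 100) :
    InCone 3 pU (pB e) (1 - 8 * e) :=
  inCone_three _ _ _ _ _ (by linarith) (by linarith) (by ring)

lemma coneBU {e : ℝ} (h0 : 0 < e) (h1 : e < 1 / 100) :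
    InCone 0 (pB e) pU (1 - 8 * e) :=
  inCone_zero _ _ _ _ _ (by linarith) (by linarith) (by ring)

lemma coneVW {e : ℝ} (h0 : 0 < e) (h1 : e < 1 / 100) :
    InCone 3 (pV e) (pW e) (1 - e) :=
  inCone_three _ _ _ _ _ (by linarith) (by linarith) (by ring)

lemma coneWV {e : ℝ} (h0 : 0 < e) (h1 : e < 1 / 100) :
    InCone 0 (pW e) (pV e) (1 - e) :=
  inCone_zero _ _ _ _ _ (by linarith) (by linarith) (by ring)

lemma coneVA {e : ℝ} (h0 : 0 < e) (h1 : e < 1 / 100) :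
    InCone 3 (pV e) (pA e) (2 - 6 * e) :=
  inCone_three _ _ _ _ _ (by linarith) (by linarith) (by ring)

lemma coneAV {e : ℝ} (h0 : 0 < e) (h1 : e < 1 / 100) :
    InCone 0 (pA e) (pV e) (2 - 6 * e) :=
  inCone_zero _ _ _ _ _ (by linarith) (by linarith) (by ring)

lemma coneVB {e : ℝ} (h0 : 0 < e) (h1 : e < 1 / 100) :
    InCone 3 (pV e) (pB e) (2 - 7 * e) :=
  inCone_three _ _ _ _ _ (by linarith) (by linarith) (by ring)

lemma coneBV {e : ℝ} (h0 : 0 < e) (h1 : e < 1 / 100) :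
    InCone 0 (pB e) (pV e) (2 - 7 * e) :=
  inCone_zero _ _ _ _ _ (by linarith) (by linarith) (by ring)

lemma coneWA {e : ℝ} (h0 : 0 < e) (h1 : e < 1 / 100) :
    InCone 2 (pW e) (pA e) (1 - 3 * e) :=
  inCone_two _ _ _ _ _ (by linarith) (by linarith) (by ring)

lemma coneAW {e : ℝ} (h0 : 0 < e) (h1 : e < 1 / 100) :
    InCone 5 (pA e) (pW e) (1 - 3 * e) :=
  inCone_five _ _ _ _ _ (by linarith) (by linarith) (by ring)

lemma coneWB {e : ℝ} (h0 : 0 < e) (h1 : e < 1 / 100) :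
    InCone 2 (pW e) (pB e) (2 - 14 * e) :=
  inCone_two _ _ _ _ _ (by linarith) (by linarith) (by ring)

lemma coneBW {e : ℝ} (h0 : 0 < e) (h1 : e < 1 / 100) :
    InCone 5 (pB e) (pW e) (2 - 14 * e) :=
  inCone_five _ _ _ _ _ (by linarith) (by linarith) (by ring)

lemma coneAB {e : ℝ} (h0 : 0 < e) (h1 : e < 1 / 100) :
    InCone 1 (pA e) (pB e) (1 - 10 * e) :=
  inCone_one _ _ _ _ _ (by linarith) (by linarith) (by ring)

lemma coneBA {e : ℝ} (h0 : 0 < e) (h1 : e < 1 / 100) :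
    InCone 4 (pB e) (pA e) (1 - 10 * e) :=
  inCone_four _ _ _ _ _ (by linarith) (by linarith) (by ring)

lemma genPos_fiveSet {e : ℝ} (h0 : 0 < e) (h1 : e < 1 / 100) : GenPos (fiveSet e) := by
  intro p hp q hq hpq j
  suffices h : ∃ k m, InCone k p q m by
    obtain ⟨k, m, h⟩ := h
    exact h.argIn_ne j
  rw [mem_fiveSet] at hp hq
  rcases hp with rfl | rfl | rfl | rfl | rfl <;> rcases hq with rfl | rfl | rfl | rfl | rfl
  · exact absurd rfl hpq
  · exact ⟨_, _, coneUV h0 h1⟩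
  · exact ⟨_, _, coneUW h0 h1⟩
  · exact ⟨_, _, coneUA h0 h1⟩
  · exact ⟨_, _, coneUB h0 h1⟩
  · exact ⟨_, _, coneVU h0 h1⟩
  · exact absurd rfl hpq
  · exact ⟨_, _, coneVW h0 h1⟩
  · exact ⟨_, _, coneVA h0 h1⟩
  · exact ⟨_, _, coneVB h0 h1⟩
  · exact ⟨_, _, coneWU h0 h1⟩
  · exact ⟨_, _, coneWV h0 h1⟩
  · exact absurd rfl hpq
  · exact ⟨_, _, coneWA h0 h1⟩
  · exact ⟨_, _, coneWB h0 h1⟩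
  · exact ⟨_, _, coneAU h0 h1⟩
  · exact ⟨_, _, coneAV h0 h1⟩
  · exact ⟨_, _, coneAW h0 h1⟩
  · exact absurd rfl hpq
  · exact ⟨_, _, coneAB h0 h1⟩
  · exact ⟨_, _, coneBU h0 h1⟩
  · exact ⟨_, _, coneBV h0 h1⟩
  · exact ⟨_, _, coneBW h0 h1⟩
  · exact ⟨_, _, coneBA h0 h1⟩
  · exact absurd rfl hpq

lemma convexPos_fiveSet {e : ℝ} (h0 : 0 < e) (h1 : e < 1 / 100) : ConvexPos (fiveSet e) := by
  have key : ∀ c d : ℝ, ∀ p ∈ fiveSet e,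
      (∀ q ∈ fiveSet e, q ≠ p → form c d q < form c d p) →
        p ∈ Set.extremePoints ℝ (convexHull ℝ (fiveSet e : Set ℂ)) :=
    fun c d p hp h => mem_extremePoints_of_form hp (form c d) h
  intro p hp
  have hp' := mem_fiveSet.1 hp
  rcases hp' with rfl | rfl | rfl | rfl | rfl
  · refine key (-(3 / 2) * e) 1 _ hp fun q hq hqp => ?_
    rcases mem_fiveSet.1 hq with rfl | rfl | rfl | rfl | rfl <;>
      first
      | exact absurd rfl hqp
      | (simp only [pU, pV, pW, pA, pB, form_pt]
         nlinarith)
  · refine key 1 0 _ hp fun q hq hqp => ?_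
    rcases mem_fiveSet.1 hq with rfl | rfl | rfl | rfl | rfl <;>
      first
      | exact absurd rfl hqp
      | (simp only [pU, pV, pW, pA, pB, form_pt]
         nlinarith)
  · refine key 0 (-1) _ hp fun q hq hqp => ?_
    rcases mem_fiveSet.1 hq with rfl | rfl | rfl | rfl | rfl <;>
      first
      | exact absurd rfl hqp
      | (simp only [pU, pV, pW, pA, pB, form_pt]
         nlinarith)
  · refine key (-1) (-2) _ hp fun q hq hqp => ?_
    rcases mem_fiveSet.1 hq with rfl | rfl | rfl | rfl | rfl <;>
      first
      | exact absurd rfl hqp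
      | (simp only [pU, pV, pW, pA, pB, form_pt]
         nlinarith)
  · refine key (-1) 0 _ hp fun q hq hqp => ?_
    rcases mem_fiveSet.1 hq with rfl | rfl | rfl | rfl | rfl <;>
      first
      | exact absurd rfl hqp
      | (simp only [pU, pV, pW, pA, pB, form_pt]
         nlinarith)

lemma thetaEdge_WV {e : ℝ} (h0 : 0 < e) (h1 : e < 1 / 100) :
    ThetaEdge (fiveSet e) (pW e) (pV e) := by
  refine thetaEdge_of_unique (coneWV h0 h1) (by simp [fiveSet]) (by simp [fiveSet]) ?_
  intro r hr
  rcases mem_fiveSet.1 hr with rfl | rfl | rfl | rfl | rfl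
  · exact .inr (.inr ⟨_, _, by norm_num, coneWU h0 h1⟩)
  · exact .inr (.inl rfl)
  · exact .inl rfl
  · exact .inr (.inr ⟨_, _, by norm_num, coneWA h0 h1⟩)
  · exact .inr (.inr ⟨_, _, by norm_num, coneWB h0 h1⟩)

lemma thetaEdge_AW {e : ℝ} (h0 : 0 < e) (h1 : e < 1 / 100) :
    ThetaEdge (fiveSet e) (pA e) (pW e) := by
  refine thetaEdge_of_unique (coneAW h0 h1) (by simp [fiveSet]) (by simp [fiveSet]) ?_
  intro r hr
  rcases mem_fiveSet.1 hr with rfl | rfl | rfl | rfl | rfl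
  · exact .inr (.inr ⟨_, _, by norm_num, coneAU h0 h1⟩)
  · exact .inr (.inr ⟨_, _, by norm_num, coneAV h0 h1⟩)
  · exact .inr (.inl rfl)
  · exact .inl rfl
  · exact .inr (.inr ⟨_, _, by norm_num, coneAB h0 h1⟩)

lemma thetaEdge_BA {e : ℝ} (h0 : 0 < e) (h1 : e < 1 / 100) :
    ThetaEdge (fiveSet e) (pB e) (pA e) := by
  refine thetaEdge_of_unique (coneBA h0 h1) (by simp [fiveSet]) (by simp [fiveSet]) ?_
  intro r hr
  rcases mem_fiveSet.1 hr with rfl | rfl | rfl | rfl | rfl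
  · exact .inr (.inr ⟨_, _, by norm_num, coneBU h0 h1⟩)
  · exact .inr (.inr ⟨_, _, by norm_num, coneBV h0 h1⟩)
  · exact .inr (.inr ⟨_, _, by norm_num, coneBW h0 h1⟩)
  · exact .inr (.inl rfl)
  · exact .inl rfl

lemma not_adj_UV {e : ℝ} (h0 : 0 < e) (h1 : e < 1 / 100) :
    ¬ TTAdj (fiveSet e) pU (pV e) := by
  refine not_or.2 ⟨?_, ?_⟩
  · exact not_thetaThetaEdge (thetaEdge_WV h0 h1) (coneVW h0 h1) (coneVU h0 h1)
      (coneUV h0 h1) (coneWV h0 h1) (by linarith)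
  · exact fun h => not_thetaEdge (coneVU h0 h1) (coneVW h0 h1) (by simp [fiveSet])
      (by linarith) h.1

lemma not_adj_UW {e : ℝ} (h0 : 0 < e) (h1 : e < 1 / 100) :
    ¬ TTAdj (fiveSet e) pU (pW e) := by
  refine not_or.2 ⟨?_, ?_⟩
  · exact not_thetaThetaEdge (thetaEdge_AW h0 h1) (coneWA h0 h1) (coneWU h0 h1)
      (coneUW h0 h1) (coneAW h0 h1) (by linarith)
  · exact fun h => not_thetaEdge (coneWU h0 h1) (coneWA h0 h1) (by simp [fiveSet])
      (by linarith) h.1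

lemma not_adj_UA {e : ℝ} (h0 : 0 < e) (h1 : e < 1 / 100) :
    ¬ TTAdj (fiveSet e) pU (pA e) := by
  refine not_or.2 ⟨?_, ?_⟩
  · exact not_thetaThetaEdge (thetaEdge_BA h0 h1) (coneAB h0 h1) (coneAU h0 h1)
      (coneUA h0 h1) (coneBA h0 h1) (by linarith)
  · exact fun h => not_thetaEdge (coneAU h0 h1) (coneAB h0 h1) (by simp [fiveSet])
      (by linarith) h.1

lemma not_adj_VA {e : ℝ} (h0 : 0 < e) (h1 : e < 1 / 100) :
    ¬ TTAdj (fiveSet e) (pV e) (pA e) := by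
  refine not_or.2 ⟨?_, ?_⟩
  · exact fun h => not_thetaEdge (coneVA h0 h1) (coneVW h0 h1) (by simp [fiveSet])
      (by linarith) h.1
  · exact not_thetaThetaEdge (thetaEdge_WV h0 h1) (coneVW h0 h1) (coneVA h0 h1)
      (coneAV h0 h1) (coneWV h0 h1) (by linarith)

lemma not_adj_VB {e : ℝ} (h0 : 0 < e) (h1 : e < 1 / 100) :
    ¬ TTAdj (fiveSet e) (pV e) (pB e) := by
  refine not_or.2 ⟨?_, ?_⟩
  · exact fun h => not_thetaEdge (coneVB h0 h1) (coneVW h0 h1) (by simp [fiveSet])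
      (by linarith) h.1
  · exact fun h => not_thetaEdge (coneBV h0 h1) (coneBU h0 h1) (by simp [fiveSet])
      (by linarith) h.1

lemma not_adj_WB {e : ℝ} (h0 : 0 < e) (h1 : e < 1 / 100) :
    ¬ TTAdj (fiveSet e) (pW e) (pB e) := by
  refine not_or.2 ⟨?_, ?_⟩
  · exact fun h => not_thetaEdge (coneWB h0 h1) (coneWA h0 h1) (by simp [fiveSet])
      (by linarith) h.1
  · exact not_thetaThetaEdge (thetaEdge_AW h0 h1) (coneWA h0 h1) (coneWB h0 h1)
      (coneBW h0 h1) (coneAW h0 h1) (by linarith)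

lemma TTAdj.mem_left {S : Finset ℂ} {p q : ℂ} (h : TTAdj S p q) : p ∈ S := by
  rcases h with h | h
  exacts [h.1.1, h.1.2.1]

/-- Lower bounds for the edges of the path `pU - pB - pA - pW - pV` and an upper bound for the
distance of its endpoints. -/
lemma dist_bounds {e : ℝ} (h0 : 0 < e) (h1 : e < 1 / 100) :
    1 - 10 * e ≤ dist pU (pB e) ∧ 1 - 11 * e ≤ dist (pB e) (pA e) ∧
      1 - 4 * e ≤ dist (pA e) (pW e) ∧ 1 - 2 * e ≤ dist (pW e) (pV e) ∧
        dist pU (pV e) ≤ 1 + e := by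
  simp only [pU, pV, pW, pA, pB, dist_pt]
  refine ⟨Real.le_sqrt_of_sq_le ?_, Real.le_sqrt_of_sq_le ?_, Real.le_sqrt_of_sq_le ?_,
    Real.le_sqrt_of_sq_le ?_, Real.sqrt_le_iff.2 ⟨by linarith, ?_⟩⟩ <;> nlinarith

open Classical in
/-- Lower bounds for the distances from `pU` along the path `pU - pB - pA - pW - pV`. -/
def potential (e : ℝ) (z : ℂ) : ℝ :=
  if z = pU then 0 else if z = pB e then 1 - 10 * e else if z = pA e then 2 - 21 * e
  else if z = pW e then 3 - 25 * e else 4 - 27 * e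

lemma potential_values {e : ℝ} (h0 : 0 < e) (h1 : e < 1 / 100) :
    potential e pU = 0 ∧ potential e (pB e) = 1 - 10 * e ∧ potential e (pA e) = 2 - 21 * e ∧
      potential e (pW e) = 3 - 25 * e ∧ potential e (pV e) = 4 - 27 * e := by
  have bu := (coneUB h0 h1).ne
  have au := (coneUA h0 h1).ne
  have wu := (coneUW h0 h1).ne
  have vu := (coneUV h0 h1).ne
  have ab := (coneBA h0 h1).ne
  have wb := (coneBW h0 h1).ne
  have vb := (coneBV h0 h1).ne
  have wa := (coneAW h0 h1).ne
  have va := (coneAV h0 h1).ne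
  have vw := (coneWV h0 h1).ne
  simp [potential, bu, au, wu, vu, ab, wb, vb, wa, va, vw]

lemma potential_step {e : ℝ} (h0 : 0 < e) (h1 : e < 1 / 100) (x y : ℂ)
    (h : TTAdj (fiveSet e) x y) : potential e y - potential e x ≤ dist x y := by
  obtain ⟨fU, fB, fA, fW, fV⟩ := potential_values h0 h1
  obtain ⟨d1, d2, d3, d4, -⟩ := dist_bounds h0 h1
  have hx := mem_fiveSet.1 h.mem_left
  have hy := mem_fiveSet.1 h.symm.mem_left
  rcases hx with rfl | rfl | rfl | rfl | rfl <;> rcases hy with rfl | rfl | rfl | rfl | rfl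
  · simp
  · exact absurd h (not_adj_UV h0 h1)
  · exact absurd h (not_adj_UW h0 h1)
  · exact absurd h (not_adj_UA h0 h1)
  · linarith
  · exact absurd h.symm (not_adj_UV h0 h1)
  · simp
  · linarith [dist_nonneg (x := (pV e)) (y := (pW e))]
  · exact absurd h (not_adj_VA h0 h1)
  · exact absurd h (not_adj_VB h0 h1)
  · exact absurd h.symm (not_adj_UW h0 h1)
  · linarith
  · simp
  · linarith [dist_nonneg (x := (pW e)) (y := (pA e))]
  · exact absurd h (not_adj_WB h0 h1)
  · exact absurd h.symm (not_adj_UA h0 h1)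
  · exact absurd h.symm (not_adj_VA h0 h1)
  · linarith
  · simp
  · linarith [dist_nonneg (x := (pA e)) (y := (pB e))]
  · linarith [dist_nonneg (x := (pB e)) (y := pU)]
  · exact absurd h.symm (not_adj_VB h0 h1)
  · exact absurd h.symm (not_adj_WB h0 h1)
  · linarith
  · simp

/-- The five points with `e ≤ ε / 50` have stretch at least `4 - ε`, as
`(4 - 50 e) (1 + e) ≤ 4 - 27 e`. -/
lemma exists_bad_set (ε : ℝ) (hε : 0 < ε) : ∃ S : Finset ℂ, ConvexPos S ∧ GenPos S ∧
    ∃ u ∈ S, ∃ v ∈ S, u ≠ v ∧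
      ∀ p : List ℂ, IsPath (TTAdj S) u v p → (4 - ε) * dist u v ≤ pathLength p := by
  obtain ⟨e, h0, h1, h2⟩ : ∃ e : ℝ, 0 < e ∧ e < 1 / 100 ∧ 50 * e ≤ ε := by
    refine ⟨min (ε / 50) (1 / 200), by positivity, ?_, ?_⟩
    · linarith [min_le_right (ε / 50) (1 / 200)]
    · linarith [min_le_left (ε / 50) (1 / 200)]
  refine ⟨fiveSet e, convexPos_fiveSet h0 h1, genPos_fiveSet h0 h1, pU, by simp [fiveSet], pV e,
    by simp [fiveSet], (coneVU h0 h1).ne, fun p hp => ?_⟩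
  have hlow := potential_le_pathLength (potential_step h0 h1) hp
  obtain ⟨fU, -, -, -, fV⟩ := potential_values h0 h1
  rw [fU, fV] at hlow
  obtain ⟨-, -, -, -, hd⟩ := dist_bounds h0 h1
  have hd0 : 0 ≤ dist pU (pV e) := dist_nonneg
  have hmono : (4 - ε) * dist pU (pV e) ≤ (4 - 50 * e) * dist pU (pV e) :=
    mul_le_mul_of_nonneg_right (by linarith) hd0
  have hup : (4 - 50 * e) * dist pU (pV e) ≤ (4 - 50 * e) * (1 + e) :=
    mul_le_mul_of_nonneg_left hd (by linarith)
  nlinarith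

/-- For every `ε > 0` there is a finite set `S` in convex and general
position and `u, v ∈ S` such that every path between `u` and `v` in `ΘΘ₆(S)` has length at
least `(4 - ε)·|uv|`; in particular no `t < 4` makes `ΘΘ₆` a `t`-spanner for all such sets. -/
theorem thetaTheta6_convex_lower_bound_four :
    (∀ ε : ℝ, 0 < ε → ∃ S : Finset ℂ, ConvexPos S ∧ GenPos S ∧
      ∃ u ∈ S, ∃ v ∈ S, u ≠ v ∧
        ∀ p : List ℂ, IsPath (TTAdj S) u v p → (4 - ε) * dist u v ≤ pathLength p) ∧
    (∀ t : ℝ, t < 4 →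
      ¬ ∀ S : Finset ℂ, ConvexPos S → GenPos S → ∀ u ∈ S, ∀ v ∈ S,
          ∃ p : List ℂ, IsPath (TTAdj S) u v p ∧ pathLength p ≤ t * dist u v) := by
  refine ⟨exists_bad_set, fun t ht hspan => ?_⟩
  obtain ⟨S, hc, hg, u, hu, v, hv, huv, h⟩ := exists_bad_set ((4 - t) / 2) (by linarith)
  obtain ⟨p, hp, hle⟩ := hspan S hc hg u hu v hv
  have := h p hp
  have hd : 0 < dist u v := dist_pos.2 huv
  nlinarith

end
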